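/- Fix a prime p. Let (R,m,k) ⊆ (S,n,l) be a finite extension of F-finite noetherian local domains of characteristic p with n ∩ R = m. Let T : S → R be an R-linear map such that σ is injective and a generic isomorphism, T is surjective, and T(n) ⊆ m. Let C be a Cartier subalgebra of C_R such that every φ ∈ C_e has a chosen T-transpose φ^⊤, and assume 1 ∉ sp(R,C) (F-purity). Set 𝔭₀ := sp(R,C) and 𝔮₀ := sp(S,f*C), and assume these are prime ideals (then 𝔮₀ ∩ R = 𝔭₀, so R/𝔭₀ ⊆ S/𝔮₀ is a finite extension of local domains). Let C̄ be the induced Cartier structure on R/𝔭₀, with C̄_e := { additive maps φ̄ : R/𝔭₀ → R/𝔭₀ with φ̄∘π_R = π_R∘φ for some φ ∈ C_e }, π_R : R → R/𝔭₀ the quotient map, and define the induced structure on S/𝔮₀ analogously from (f*C)_e; let ā_e(R/𝔭₀) and ā_e(S/𝔮₀) be the corresponding splitting numbers with respect to the maximal ideals m/𝔭₀ and n/𝔮₀. Assume ā_e(R/𝔭₀) ≠ 0 for some e, set n₀ := gcd{ e ≥ 1 : ā_e(R/𝔭₀) ≠ 0 }, d̄ := dim R/𝔭₀, d̄' := dim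 S/𝔮₀, r_k := [k^{1/p}:k], r_l := [l^{1/p}:l]. If e ↦ ā_{n₀e}(R/𝔭₀)/(p^{n₀e·d̄}·r_k^{n₀e}) converges to a real number r(R,C) and e ↦ ā_{n₀e}(S/𝔮₀)/(p^{n₀e·d̄'}·r_l^{n₀e}) converges to a real number r(S,f*C), then [l : k]·r(S,f*C) = [Frac(S/𝔮₀) : Frac(R/𝔭₀)]·r(R,C). -/

import Mathlib

/-- `p^e`-semilinear additive maps ("Cartier maps"):
`φ (a^{p^e} • x) = a • φ x`. -/
def IsCartierMap (p : ℕ) (A : Type*) [CommSemiring A] {X Y : Type*} [AddCommMonoid X]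
    [AddCommMonoid Y] [Module A X] [Module A Y] (e : ℕ) (φ : X →+ Y) : Prop :=
  ∀ (a : A) (x : X), φ (a ^ p ^ e • x) = a • φ x

/-- A Cartier structure (Cartier subalgebra of `C_X`) on an `A`-module `X`. -/
structure CartierStructure (p : ℕ) (A : Type*) [CommRing A] (X : Type*) [AddCommGroup X]
    [Module A X] where
  carrier : ℕ → Set (X →+ X)
  cartier_mem : ∀ e, 1 ≤ e → ∀ φ ∈ carrier e, IsCartierMap p A e φ
  add_mem : ∀ e, 1 ≤ e → ∀ φ ∈ carrier e, ∀ ψ ∈ carrier e, φ + ψ ∈ carrier e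
  smul_mem : ∀ e, 1 ≤ e → ∀ (a : A), ∀ φ ∈ carrier e,
    (DistribMulAction.toAddMonoidHom X a).comp φ ∈ carrier e
  mul_mem : ∀ e, 1 ≤ e → ∀ (a : A), ∀ φ ∈ carrier e,
    φ.comp (DistribMulAction.toAddMonoidHom X a) ∈ carrier e
  comp_mem : ∀ e d, 1 ≤ e → 1 ≤ d → ∀ φ ∈ carrier e, ∀ ψ ∈ carrier d,
    φ.comp ψ ∈ carrier (e + d)

/-- The `S`-linear map `σ : S → Hom_R(S,R)`, `σ(s)(x) = T(s·x)`, as an `R`-bilinear map. -/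
noncomputable def sigmaT (R S : Type*) [CommRing R] [CommRing S] [Algebra R S]
    (T : S →ₗ[R] R) : S →ₗ[R] (S →ₗ[R] R) :=
  LinearMap.mk₂ R (fun s x => T (s * x))
    (fun s s' x => by show T ((s + s') * x) = T (s * x) + T (s' * x); rw [add_mul, map_add])
    (fun r s x => by show T ((r • s) * x) = r • T (s * x); rw [smul_mul_assoc, map_smul])
    (fun s x x' => by show T (s * (x + x')) = T (s * x) + T (s * x'); rw [mul_add, map_add])
    (fun r s x => by show T (s * (r • x)) = r • T (s * x); rw [mul_smul_comm, map_smul])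

/-- `ψ` is a `T`-transpose of `φ`: `T (ψ s * s') = φ (T (s * s'^{p^e}))`. -/
def IsTranspose (p : ℕ) {R S : Type*} [CommRing R] [CommRing S] [Algebra R S]
    (T : S →ₗ[R] R) (e : ℕ) (φ : R →+ R) (ψ : S →+ S) : Prop :=
  ∀ s s' : S, T (ψ s * s') = φ (T (s * s' ^ p ^ e))

/-- The degree-`e` part of the pulled back Cartier algebra `f^*C`:
finite sums `Σ φᵢ^⊤ · sᵢ` where `(χ · s) x = χ (s * x)`. -/
def pushFam {R S : Type*} [CommRing R] [CommRing S] (D : ℕ → Set (R →+ R))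
    (tr : ℕ → (R →+ R) → (S →+ S)) : ℕ → Set (S →+ S) := fun e =>
  { ψ | ∃ (k : ℕ) (φ : Fin k → R →+ R) (s : Fin k → S), (∀ i, φ i ∈ D e) ∧
      ψ = ∑ i, (tr e (φ i)).comp (AddMonoidHom.mulLeft (s i)) }

/-- The splitting prime of a family of Cartier linear maps on a local ring. -/
def spSet (A : Type*) [CommRing A] [IsLocalRing A] (D : ℕ → Set (A →+ A)) : Set A :=
  { a | ∀ e, 1 ≤ e → ∀ φ ∈ D e, φ a ∈ IsLocalRing.maximalIdeal A }

/-- The length of a module, as the Krull dimension of its submodule lattice. -/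
noncomputable def moduleLength (A : Type*) [Ring A] (M : Type*) [AddCommGroup M]
    [Module A M] : WithBot ℕ∞ :=
  Order.krullDim (Submodule A M)

/-- The splitting number `a_e`: the length (as a left `A`-module) of `D/D^{ns}` where
`D^{ns} = {ϑ ∈ D | ϑ(X) ⊆ m}`, realized as the image of the span of `D` in the quotient by
the span of `D^{ns}`. -/
noncomputable def splitNum (A : Type*) [CommRing A] [IsLocalRing A]
    {X : Type*} [AddCommMonoid X] (D : Set (X →+ A)) : WithBot ℕ∞ :=
  moduleLength A
    ↥(Submodule.map
        (Submodule.span A { ϑ ∈ D | ∀ x, ϑ x ∈ IsLocalRing.maximalIdeal A }).mkQ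
        (Submodule.span A D))

/-- Type synonym for a ring viewed as a module over itself via Frobenius. -/
def FrobMod (A : Type*) := A

instance {A : Type*} [AddCommGroup A] : AddCommGroup (FrobMod A) := ‹AddCommGroup A›

/-- The module structure of `A` on `FrobMod A = A` via the Frobenius `a ↦ a^p`;
`A` is `F`-finite iff `FrobMod A` is a finite module, and `[A^{1/p} : A]` is its rank. -/
noncomputable def frobModule (p : ℕ) (hp : p.Prime) (A : Type*) [CommRing A] [CharP A p] :
    Module A (FrobMod A) :=
  haveI : ExpChar A p := .prime hp
  Module.compHom A (frobenius A p)

/-- The family of maps induced on `A ⧸ I` by a family of maps on `A` (for compatible `I`). -/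
def inducedFam {A : Type*} [CommRing A] (I : Ideal A) (D : ℕ → Set (A →+ A)) :
    ℕ → Set ((A ⧸ I) →+ (A ⧸ I)) := fun e =>
  { φb | ∃ φ ∈ D e, ∀ a : A, φb (Ideal.Quotient.mk I a) = Ideal.Quotient.mk I (φ a) }

/-
Put `A = R / 𝔭₀`, `B = S / 𝔮₀` and `q = p ^ e`. Computing `𝔮₀` through transposes gives
`𝔮₀ = {s | T (s S) ⊆ 𝔭₀}`, so `T` descends to an `A`-linear map `B → A` which is nondegenerate.

Let `I_e` be the largest ideal that all induced maps of degree `e` send into the maximal ideal. On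
residues, these maps pair perfectly with `F^e_* (A / I_e)` once the nonsplit ones are divided out,
whence `a_e(A) = length_A (A / I_e) * [k^{1/p} : k] ^ e`, and likewise for `B`. Transposition gives
`I_e(B) = {b | T (b B) ⊆ I_e(A)}`.

A basis of `Frac B` over `Frac A` taken in `B` yields an injection `A ^ n → B`, and pairing against
it under `T` an injection `B → A ^ n`; both have torsion cokernel. As `I_e(A)` contains the `q`-th
powers of the elements of the maximal ideal, a torsion module changes lengths by `O(q ^ (d - 1))`
only, where `d = dim A`, and therefore
`length_A (B / I_e(B)) = [Frac B : Frac A] * length_A (A / I_e(A)) + O(q ^ (d - 1))`. On the left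
`length_A = [l : k] * length_B`; since also `[k^{1/p} : k] = [l^{1/p} : l]`, dividing by
`q ^ d * [k^{1/p} : k] ^ e` and passing to the limit gives the formula.
-/

open IsLocalRing

section Length

variable {A M N P : Type*} [CommRing A] [AddCommGroup M] [Module A M] [AddCommGroup N]
  [Module A N] [AddCommGroup P] [Module A P]

theorem length_le_add_of_exact {f : M →ₗ[A] N} {g : N →ₗ[A] P} (h : Function.Exact f g) :
    Module.length A N ≤ Module.length A M + Module.length A P := by
  rw [Module.length_eq_add_of_exact (LinearMap.range f).subtype (LinearMap.range f).mkQ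
    (Submodule.subtype_injective _) (Submodule.mkQ_surjective _) (LinearMap.exact_subtype_mkQ _)]
  gcongr
  · exact Module.length_le_of_surjective f.rangeRestrict f.surjective_rangeRestrict
  · rw [← h.linearMap_ker_eq, g.quotKerEquivRange.length_eq]
    exact Module.length_le_of_injective _ (Submodule.subtype_injective _)

theorem length_quotient_anti {K L : Submodule A M} (h : K ≤ L) :
    Module.length A (M ⧸ L) ≤ Module.length A (M ⧸ K) :=
  Module.length_le_of_surjective (Submodule.factor h) (Submodule.factor_surjective h)

theorem length_quotient_le_add_length_quotient_range_sup (f : M →ₗ[A] N) {M' : Submodule A M}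
    {N' : Submodule A N} (h : M' ≤ N'.comap f) :
    Module.length A (N ⧸ N') ≤
      Module.length A (M ⧸ M') + Module.length A (N ⧸ LinearMap.range f ⊔ N') := by
  refine length_le_add_of_exact (f := Submodule.mapQ M' N' f h)
    (g := Submodule.factor le_sup_right) (LinearMap.exact_iff.2 ?_)
  rw [Submodule.factor, Submodule.ker_mapQ, Submodule.range_mapQ, Submodule.comap_id,
    Submodule.map_sup, Submodule.mkQ_map_self, sup_bot_eq]

theorem length_quotient_sup_span_pow_le (I : Ideal A) (x : A) (q : ℕ) :
    Module.length A (A ⧸ I ⊔ Ideal.span {x ^ q}) ≤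
      q * Module.length A (A ⧸ I ⊔ Ideal.span {x}) := by
  induction q with
  | zero =>
    have : Subsingleton (A ⧸ I ⊔ Ideal.span {x ^ 0}) := Ideal.Quotient.subsingleton_iff.2 (by simp)
    simp
  | succ q ih =>
    have hcomap : I ⊔ Ideal.span {x} ≤
        (I ⊔ Ideal.span {x ^ (q + 1)} : Submodule A A).comap
          (LinearMap.mulLeft A (x ^ q)) := by
      refine sup_le (fun y hy => Ideal.mem_sup_left (I.mul_mem_left _ hy)) ?_
      rw [Ideal.span_singleton_le_iff_mem]
      refine Ideal.mem_sup_right ?_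
      rw [LinearMap.mulLeft_apply, ← pow_succ]
      exact Ideal.mem_span_singleton_self _
    have hrange : I ⊔ Ideal.span {x ^ q} ≤
        LinearMap.range (LinearMap.mulLeft A (x ^ q)) ⊔ (I ⊔ Ideal.span {x ^ (q + 1)}) := by
      refine sup_le (le_sup_left.trans le_sup_right) (le_sup_of_le_left ?_)
      rw [Ideal.span_singleton_le_iff_mem]
      exact ⟨1, mul_one _⟩
    calc Module.length A (A ⧸ I ⊔ Ideal.span {x ^ (q + 1)})
        ≤ Module.length A (A ⧸ I ⊔ Ideal.span {x}) + Module.length A (A ⧸ I ⊔ Ideal.span {x ^ q}) :=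
          (length_quotient_le_add_length_quotient_range_sup _ hcomap).trans
            (by gcongr; exact length_quotient_anti hrange)
      _ ≤ _ := by
          rw [Nat.cast_succ, add_mul, one_mul, add_comm]
          gcongr

theorem length_quotient_sup_span_image_pow_le (I : Ideal A) (s : Finset A) (q : ℕ) :
    Module.length A (A ⧸ I ⊔ Ideal.span ((· ^ q) '' (s : Set A))) ≤
      (q ^ s.card : ℕ) * Module.length A (A ⧸ I ⊔ Ideal.span (s : Set A)) := by
  classical
  induction s using Finset.induction_on generalizing I with
  | empty => rw [Finset.coe_empty, Set.image_empty]; simp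
  | insert a s ha ih =>
    rw [Finset.coe_insert, Set.image_insert_eq, Ideal.span_insert, Ideal.span_insert, ← sup_assoc,
      ← sup_assoc, Finset.card_insert_of_notMem ha, pow_succ, Nat.cast_mul, mul_assoc]
    refine (ih _).trans ?_
    rw [sup_right_comm I (Ideal.span {a ^ q}), sup_right_comm I (Ideal.span {a})]
    gcongr
    exact length_quotient_sup_span_pow_le _ _ _

theorem length_pi_quotient_pi {n : ℕ} (I : Ideal A) :
    Module.length A ((Fin n → A) ⧸ Submodule.pi Set.univ fun _ : Fin n => I) =
      n * Module.length A (A ⧸ I) := by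
  rw [(Submodule.quotientPi fun _ : Fin n => I).length_eq]
  simp

theorem length_le_mul_length_quotient_of_surjective {n : ℕ} {π : (Fin n → A) →ₗ[A] M}
    (hπ : Function.Surjective π) {I : Ideal A} (hI : I ≤ Module.annihilator A M) :
    Module.length A M ≤ n * Module.length A (A ⧸ I) := by
  rw [← length_pi_quotient_pi]
  refine Module.length_le_of_surjective (Submodule.liftQ _ π fun v hv => ?_)
    (LinearMap.range_eq_top.1 (by rw [Submodule.range_liftQ, LinearMap.range_eq_top.2 hπ]))
  rw [LinearMap.mem_ker, pi_eq_sum_univ' v, map_sum]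
  refine Finset.sum_eq_zero fun i _ => ?_
  rw [map_smul, Module.mem_annihilator.1 (hI ((Submodule.mem_pi.1 hv) i trivial))]

theorem length_quotient_map_mk (I J : Ideal A) :
    Module.length (A ⧸ I) ((A ⧸ I) ⧸ J.map (Ideal.Quotient.mk I)) = Module.length A (A ⧸ I ⊔ J) :=
  (Module.length_eq_of_surjective (R := A ⧸ I) (S := A)
    (M := (A ⧸ I) ⧸ J.map (Ideal.Quotient.mk I)) Ideal.Quotient.mk_surjective).symm.trans
    (DoubleQuot.quotQuotEquivQuotSupₐ A I J).toLinearEquiv.length_eq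

end Length

section HilbertKunz

variable {A : Type*} [CommRing A] [IsLocalRing A] [IsNoetherianRing A]

theorem length_quotient_ne_top_of_maximalIdeal_mem_minimalPrimes {I : Ideal A}
    (hI : maximalIdeal A ∈ I.minimalPrimes) : Module.length A (A ⧸ I) ≠ ⊤ := by
  have := IsLocalRing.quotient_artinian_of_mem_minimalPrimes_of_isLocalRing I hI
  rw [Module.length_eq_of_surjective (R := A ⧸ I) Ideal.Quotient.mk_surjective]
  exact Module.length_ne_top

theorem length_quotient_ne_top_of_pow_mem {I : Ideal A} {q : ℕ}
    (hI : ∀ a ∈ maximalIdeal A, a ^ q ∈ I) : Module.length A (A ⧸ I) ≠ ⊤ := by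
  by_cases htop : I = ⊤
  · have : Subsingleton (A ⧸ I) := Ideal.Quotient.subsingleton_iff.2 htop
    simp
  · exact length_quotient_ne_top_of_maximalIdeal_mem_minimalPrimes
      ⟨⟨inferInstance, le_maximalIdeal htop⟩,
        fun P hP _ a ha => hP.1.mem_of_pow_mem q (hP.2 (hI a ha))⟩

theorem exists_length_quotient_le_mul_pow {d : ℕ} (hd : ringKrullDim A = d) :
    ∃ C : ℕ, ∀ (q : ℕ) (J : Ideal A), (∀ a ∈ maximalIdeal A, a ^ q ∈ J) →
      Module.length A (A ⧸ J) ≤ (C * q ^ d : ℕ) := by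
  obtain ⟨s, hs, hcard⟩ :=
    Ideal.exists_finset_card_eq_height_of_isNoetherianRing (maximalIdeal A)
  have hcard : s.card = d := by
    rw [← IsLocalRing.maximalIdeal_height_eq_ringKrullDim, ← hcard] at hd
    exact_mod_cast hd
  obtain ⟨C, hC⟩ := ENat.ne_top_iff_exists.1
    (length_quotient_ne_top_of_maximalIdeal_mem_minimalPrimes hs)
  refine ⟨C, fun q J hJ => ?_⟩
  have hle : Ideal.span ((· ^ q) '' (s : Set A)) ≤ J := by
    rw [Ideal.span_le]
    rintro _ ⟨x, hx, rfl⟩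
    exact hJ x (hs.1.2 (Ideal.subset_span hx))
  have hpow := length_quotient_sup_span_image_pow_le ⊥ s q
  rw [bot_sup_eq, bot_sup_eq, ← hC, hcard] at hpow
  calc Module.length A (A ⧸ J) ≤ (q ^ d : ℕ) * (C : ℕ∞) := (length_quotient_anti hle).trans hpow
    _ = (C * q ^ d : ℕ) := by push_cast; ring

theorem exists_mul_length_quotient_span_sup_le_mul_pow [IsDomain A] {d : ℕ}
    (hd : ringKrullDim A = d) {c : A} (hc : c ≠ 0) :
    ∃ C : ℕ, ∀ (q : ℕ) (J : Ideal A), (∀ a ∈ maximalIdeal A, a ^ q ∈ J) →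
      q * Module.length A (A ⧸ Ideal.span {c} ⊔ J) ≤ (C * q ^ d : ℕ) := by
  by_cases hunit : IsUnit c
  · refine ⟨0, fun q J _ => ?_⟩
    have : Subsingleton (A ⧸ Ideal.span {c} ⊔ J) :=
      Ideal.Quotient.subsingleton_iff.2 (by rw [Ideal.span_singleton_eq_top.2 hunit, top_sup_eq])
    simp
  have hcm : c ∈ maximalIdeal A := (mem_maximalIdeal c).2 hunit
  have : Nontrivial (A ⧸ Ideal.span {c}) :=
    Ideal.Quotient.nontrivial_iff.2 (mt Ideal.span_singleton_eq_top.1 hunit)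
  have : IsLocalRing (A ⧸ Ideal.span {c}) :=
    IsLocalRing.of_surjective' (Ideal.Quotient.mk _) Ideal.Quotient.mk_surjective
  have := IsLocalHom.of_surjective (Ideal.Quotient.mk (Ideal.span {c})) Ideal.Quotient.mk_surjective
  have hdim := ringKrullDim_quotient_span_singleton_succ_eq_ringKrullDim_of_mem_nonZeroDivisors
    (mem_nonZeroDivisors_of_ne_zero hc) hcm
  obtain ⟨d', hd'⟩ : ∃ d' : ℕ, ringKrullDim (A ⧸ Ideal.span {c}) = d' :=
    ⟨_, by rw [← maximalIdeal_height_eq_ringKrullDim, ← ENat.natCast_toNat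
      (Ideal.height_ne_top (Ideal.IsPrime.ne_top inferInstance))]; rfl⟩
  obtain ⟨C, hC⟩ := exists_length_quotient_le_mul_pow hd'
  obtain rfl : d = d' + 1 := by
    rw [hd, hd'] at hdim
    exact_mod_cast hdim.symm
  refine ⟨C, fun q J hJ => ?_⟩
  have hlen := hC q (J.map (Ideal.Quotient.mk (Ideal.span {c}))) fun a ha => by
    obtain ⟨a, rfl⟩ := Ideal.Quotient.mk_surjective a
    rw [← map_pow]
    refine Ideal.mem_map_of_mem _ (hJ a ?_)
    rw [← maximalIdeal_comap (Ideal.Quotient.mk (Ideal.span {c}))]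
    exact ha
  rw [length_quotient_map_mk] at hlen
  calc (q : ℕ∞) * Module.length A (A ⧸ Ideal.span {c} ⊔ J) ≤ q * (C * q ^ d' : ℕ) := by gcongr
    _ = (C * q ^ (d' + 1) : ℕ) := by push_cast; ring

end HilbertKunz

section EqualRank

variable {A M N : Type*} [CommRing A] [IsDomain A] [AddCommGroup M] [Module A M] [AddCommGroup N]
  [Module A N] [Module.Finite A N]

theorem exists_ne_zero_forall_smul_mem_range {f : M →ₗ[A] N} (hf : Function.Injective f)
    (hrank : Module.finrank A M = Module.finrank A N) :
    ∃ c : A, c ≠ 0 ∧ ∀ y : N, c • y ∈ LinearMap.range f := by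
  have hcoker : Module.finrank A (N ⧸ LinearMap.range f) = 0 := by
    have := (LinearMap.range f).finrank_quotient_add_finrank
    rw [LinearMap.finrank_range_of_inj hf] at this
    omega
  obtain ⟨c, hc, hc0⟩ :=
    Submodule.annihilator_top_inter_nonZeroDivisors (Module.finrank_eq_zero_iff_isTorsion.1 hcoker)
  refine ⟨c, nonZeroDivisors.ne_zero hc0, fun y => ?_⟩
  rw [← Submodule.Quotient.mk_eq_zero, Submodule.Quotient.mk_smul]
  exact Submodule.mem_annihilator.1 hc _ trivial

variable [IsLocalRing A] [IsNoetherianRing A]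

theorem exists_mul_length_quotient_le_of_injective {d : ℕ} (hd : ringKrullDim A = d)
    {f : M →ₗ[A] N} (hf : Function.Injective f)
    (hrank : Module.finrank A M = Module.finrank A N) :
    ∃ C : ℕ, ∀ (q : ℕ) (J : Ideal A) (M' : Submodule A M) (N' : Submodule A N),
      (∀ a ∈ maximalIdeal A, a ^ q ∈ J) → M' ≤ N'.comap f → J • ⊤ ≤ N' →
      q * Module.length A (N ⧸ N') ≤ q * Module.length A (M ⧸ M') + (C * q ^ d : ℕ) := by
  obtain ⟨c, hc, hcrange⟩ := exists_ne_zero_forall_smul_mem_range hf hrank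
  obtain ⟨C, hC⟩ := exists_mul_length_quotient_span_sup_le_mul_pow hd hc
  obtain ⟨g, π, hπ⟩ := Module.Finite.exists_fin' A N
  refine ⟨g * C, fun q J M' N' hJ hle hJN => ?_⟩
  set U := LinearMap.range f ⊔ N'
  have hann : Ideal.span {c} ⊔ J ≤ Module.annihilator A (N ⧸ U) := by
    rw [Submodule.annihilator_quotient, sup_le_iff, Ideal.span_singleton_le_iff_mem]
    exact ⟨Submodule.mem_colon.2 fun y _ => Submodule.mem_sup_left (hcrange y),
      fun a ha => Submodule.mem_colon.2 fun y _ =>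
        Submodule.mem_sup_right (hJN (Submodule.smul_mem_smul ha trivial))⟩
  have hU : Module.length A (N ⧸ U) ≤ g * Module.length A (A ⧸ Ideal.span {c} ⊔ J) :=
    length_le_mul_length_quotient_of_surjective (π := U.mkQ ∘ₗ π)
      (U.mkQ_surjective.comp hπ) hann
  calc (q : ℕ∞) * Module.length A (N ⧸ N')
      ≤ q * (Module.length A (M ⧸ M') + g * Module.length A (A ⧸ Ideal.span {c} ⊔ J)) := by
        gcongr
        exact (length_quotient_le_add_length_quotient_range_sup f hle).trans (by gcongr)
    _ = q * Module.length A (M ⧸ M') + g * (q * Module.length A (A ⧸ Ideal.span {c} ⊔ J)) := by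
        ring
    _ ≤ q * Module.length A (M ⧸ M') + g * (C * q ^ d : ℕ) := by
        gcongr
        exact hC q J hJ
    _ = q * Module.length A (M ⧸ M') + (g * C * q ^ d : ℕ) := by push_cast; ring

end EqualRank

section PullbackIdeal

variable {A B : Type*} [CommRing A] [CommRing B] [Algebra A B]

/-- For `T : B → A`, the largest ideal of `B` contained in `T ⁻¹ J`, that is, the preimage under
`b ↦ (x ↦ T (b * x))` of the `A`-linear maps `B → J`. Splitting ideals of `B` are obtained in this
way from those of `A`, and `T` is nondegenerate exactly when the pullback of `⊥` is `⊥`. -/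
def pullbackIdeal (T : B →ₗ[A] A) (J : Ideal A) : Ideal B where
  carrier := {b | ∀ x, T (b * x) ∈ J}
  add_mem' hb hc x := by rw [add_mul, map_add]; exact J.add_mem (hb x) (hc x)
  zero_mem' x := by rw [zero_mul, map_zero]; exact J.zero_mem
  smul_mem' c b hb x := by
    rw [smul_eq_mul, mul_comm c, mul_assoc]
    exact hb (c * x)

variable {T : B →ₗ[A] A}

theorem mem_pullbackIdeal {J : Ideal A} {b : B} : b ∈ pullbackIdeal T J ↔ ∀ x, T (b * x) ∈ J :=
  Iff.rfl

theorem smul_top_le_pullbackIdeal (J : Ideal A) :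
    J • ⊤ ≤ (pullbackIdeal T J).restrictScalars A := by
  refine Submodule.smul_le.2 fun a ha b _ x => ?_
  rw [smul_mul_assoc, map_smul, smul_eq_mul]
  exact J.mul_mem_right _ ha

theorem comap_algebraMap_pullbackIdeal (hT : Function.Surjective T) (J : Ideal A) :
    (pullbackIdeal T J).comap (algebraMap A B) = J := by
  ext a
  have hmul (x : B) : T (algebraMap A B a * x) = a * T x := by
    rw [← Algebra.smul_def, map_smul, smul_eq_mul]
  simp only [Ideal.mem_comap, mem_pullbackIdeal, hmul]
  refine ⟨fun h => ?_, fun ha x => J.mul_mem_right _ ha⟩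
  obtain ⟨x, hx⟩ := hT 1
  simpa [hx] using h x

theorem pullbackIdeal_maximalIdeal [IsLocalRing A] [IsLocalRing B] (hT : Function.Surjective T)
    (hTm : ∀ b ∈ maximalIdeal B, T b ∈ maximalIdeal A) :
    pullbackIdeal T (maximalIdeal A) = maximalIdeal B := by
  refine le_antisymm (le_maximalIdeal fun htop => ?_)
    fun b hb x => hTm _ (Ideal.mul_mem_right x _ hb)
  have hcomap := comap_algebraMap_pullbackIdeal hT (maximalIdeal A)
  rw [htop, Ideal.comap_top] at hcomap
  exact Ideal.IsPrime.ne_top inferInstance hcomap.symm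

theorem injective_pi_comp_mulRight [IsDomain A] [Module.Finite A B] (hT : pullbackIdeal T ⊥ = ⊥)
    {u : Fin (Module.finrank A B) → B} (hu : LinearIndependent A u) :
    Function.Injective (LinearMap.pi fun i => T ∘ₗ LinearMap.mulRight A (u i)) := by
  obtain ⟨c, hc, hrange⟩ := exists_ne_zero_forall_smul_mem_range
    (hu.fintypeLinearCombination_injective) (Module.finrank_fin_fun A)
  rw [injective_iff_map_eq_zero]
  intro b hb
  rw [← Ideal.mem_bot, ← hT]
  intro x
  obtain ⟨v, hv⟩ := hrange x
  have hcx : c * T (b * x) = 0 := by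
    rw [← smul_eq_mul, ← map_smul, ← mul_smul_comm, ← hv, Fintype.linearCombination_apply,
      Finset.mul_sum, map_sum]
    refine Finset.sum_eq_zero fun i _ => ?_
    rw [mul_smul_comm, map_smul, show T (b * u i) = 0 from congrFun hb i, smul_zero]
  exact (mul_eq_zero.1 hcx).resolve_left hc

variable [IsDomain A] [IsLocalRing A] [IsNoetherianRing A] [Module.Finite A B]

theorem exists_mul_length_quotient_pullbackIdeal_le {d : ℕ} (hd : ringKrullDim A = d)
    (T : B →ₗ[A] A) :
    ∃ C : ℕ, ∀ (q : ℕ) (J : Ideal A), (∀ a ∈ maximalIdeal A, a ^ q ∈ J) →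
      q * Module.length A (B ⧸ pullbackIdeal T J) ≤
        q * (Module.finrank A B * Module.length A (A ⧸ J)) + (C * q ^ d : ℕ) := by
  obtain ⟨u, hu⟩ := exists_linearIndependent_of_le_finrank (R := A) (M := B) le_rfl
  obtain ⟨C, hC⟩ := exists_mul_length_quotient_le_of_injective hd
    (hu.fintypeLinearCombination_injective) (Module.finrank_fin_fun A)
  refine ⟨C, fun q J hJ => ?_⟩
  rw [← length_pi_quotient_pi]
  refine hC q J _ ((pullbackIdeal T J).restrictScalars A) hJ (fun v hv => ?_)
    (smul_top_le_pullbackIdeal J)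
  rw [Submodule.mem_comap, Fintype.linearCombination_apply]
  refine Submodule.sum_mem _ fun i _ => smul_top_le_pullbackIdeal (T := T) J ?_
  exact Submodule.smul_mem_smul (Submodule.mem_pi.1 hv i trivial) trivial

theorem exists_mul_finrank_mul_length_quotient_le {d : ℕ} (hd : ringKrullDim A = d)
    (hT : pullbackIdeal T ⊥ = ⊥) :
    ∃ C : ℕ, ∀ (q : ℕ) (J : Ideal A), (∀ a ∈ maximalIdeal A, a ^ q ∈ J) →
      q * (Module.finrank A B * Module.length A (A ⧸ J)) ≤
        q * Module.length A (B ⧸ pullbackIdeal T J) + (C * q ^ d : ℕ) := by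
  obtain ⟨u, hu⟩ := exists_linearIndependent_of_le_finrank (R := A) (M := B) le_rfl
  obtain ⟨C, hC⟩ := exists_mul_length_quotient_le_of_injective hd
    (injective_pi_comp_mulRight hT hu) (Module.finrank_fin_fun A).symm
  refine ⟨C, fun q J hJ => ?_⟩
  rw [← length_pi_quotient_pi]
  refine hC q J ((pullbackIdeal T J).restrictScalars A) _ hJ
    (fun b hb => Submodule.mem_pi.2 fun i _ => hb (u i)) ?_
  exact Submodule.smul_le.2 fun a ha v _ => Submodule.mem_pi.2 fun i _ => J.mul_mem_right _ ha

end PullbackIdeal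

section ResidueFieldDuality

variable {A M V : Type*} [CommRing A] [AddCommGroup M] [Module A M] [AddCommGroup V]
  [Module A V]

theorem length_linearMap_le_add (N : Submodule A M) (P : Type*) [AddCommGroup P] [Module A P] :
    Module.length A (M →ₗ[A] P) ≤
      Module.length A (M ⧸ N →ₗ[A] P) + Module.length A (N →ₗ[A] P) :=
  length_le_add_of_exact (LinearMap.exact_lcomp_of_exact_of_surjective P
    (LinearMap.exact_subtype_mkQ N) N.mkQ_surjective)

theorem length_linearMap_le_of_isSimpleModule [IsSimpleModule A M] (P : Type*) [AddCommGroup P]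
    [Module A P] : Module.length A (M →ₗ[A] P) ≤ Module.length A P := by
  obtain ⟨v, hv⟩ := @exists_ne M (IsSimpleModule.nontrivial A M) 0
  refine Module.length_le_of_injective (LinearMap.applyₗ v)
    ((injective_iff_map_eq_zero _).2 fun φ hφ => ?_)
  exact LinearMap.ext_on_range (v := fun _ : Unit => v)
    (by rw [Set.range_const]; exact IsSimpleModule.span_singleton_eq_top A hv) fun _ => hφ

variable [IsLocalRing A]

variable (A) in
theorem length_residueField : Module.length A (ResidueField A) = 1 := by
  rw [Module.length_eq_of_surjective (R := ResidueField A) residue_surjective]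
  exact Module.length_eq_one _ _

theorem length_linearMap_residueField_le (hV : IsFiniteLength A V) :
    Module.length A (V →ₗ[A] ResidueField A) ≤ Module.length A V := by
  induction hV with
  | of_subsingleton => simp
  | @of_simple_quotient M _ _ N _ _ ih =>
    calc Module.length A (M →ₗ[A] ResidueField A)
        ≤ Module.length A (M ⧸ N →ₗ[A] ResidueField A) +
            Module.length A (N →ₗ[A] ResidueField A) := length_linearMap_le_add N _
      _ ≤ 1 + Module.length A N := by
          gcongr
          rw [← length_residueField A]
          exact length_linearMap_le_of_isSimpleModule _
      _ = Module.length A M := by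
          rw [Module.length_eq_add_of_exact N.subtype N.mkQ (Submodule.subtype_injective _)
            (Submodule.mkQ_surjective _) (LinearMap.exact_subtype_mkQ _),
            Module.length_eq_one A (M ⧸ N), add_comm]

theorem length_range_flip_eq (β : V →ₗ[A] M →ₗ[A] ResidueField A)
    (hβ : Module.length A (LinearMap.range β) ≠ ⊤) :
    Module.length A (LinearMap.range β.flip) = Module.length A (LinearMap.range β) := by
  set γ := (LinearMap.range β.flip).subtype.flip
  have hker : LinearMap.ker γ = LinearMap.ker β := by
    ext v
    rw [LinearMap.mem_ker, LinearMap.mem_ker, LinearMap.ext_iff, LinearMap.ext_iff]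
    exact (LinearMap.surjective_rangeRestrict β.flip).forall
  have hlen : Module.length A (V ⧸ LinearMap.ker γ) = Module.length A (LinearMap.range β) := by
    rw [hker]
    exact LinearEquiv.length_eq β.quotKerEquivRange
  rw [← hlen] at hβ ⊢
  have hinj : Function.Injective ((LinearMap.ker γ).liftQ γ le_rfl) :=
    LinearMap.ker_eq_bot.1 (Submodule.ker_liftQ_eq_bot _ _ _ le_rfl)
  have hinj' : Function.Injective ((LinearMap.ker γ).liftQ γ le_rfl).flip := fun φ ψ h =>
    Subtype.ext (LinearMap.ext fun v => LinearMap.congr_fun h (Submodule.Quotient.mk v))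
  have hle : Module.length A (LinearMap.range β.flip) ≤ Module.length A (V ⧸ LinearMap.ker γ) :=
    (Module.length_le_of_injective _ hinj').trans
      (length_linearMap_residueField_le (Module.length_ne_top_iff.1 hβ))
  exact hle.antisymm ((Module.length_le_of_injective _ hinj).trans
    (length_linearMap_residueField_le (Module.length_ne_top_iff.1 (ne_top_of_le_ne_top hβ hle))))

end ResidueFieldDuality

section Degree

/-- The degree `[L : f(K)]` of a homomorphism of fields. It is attached to the homomorphism, and
not to an `Algebra` instance, because powers of the Frobenius and conjugates of them are compared;
the value is `0` if the extension is infinite. -/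
noncomputable def fieldHomDegree {K L : Type*} [Field K] [Field L] (f : K →+* L) : ℕ :=
  letI := f.toAlgebra
  Module.finrank K L

variable {K L E : Type*} [Field K] [Field L] [Field E]

theorem fieldHomDegree_algebraMap [Algebra K L] :
    fieldHomDegree (algebraMap K L) = Module.finrank K L := by
  rw [fieldHomDegree, Algebra.algebra_ext (algebraMap K L).toAlgebra ‹_› fun _ => rfl]

theorem fieldHomDegree_comp (f : K →+* L) (g : L →+* E) :
    fieldHomDegree (g.comp f) = fieldHomDegree f * fieldHomDegree g := by
  let _ := f.toAlgebra
  let _ := g.toAlgebra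
  let _ := (g.comp f).toAlgebra
  have : IsScalarTower K L E := IsScalarTower.of_algebraMap_eq fun _ => rfl
  exact (Module.finrank_mul_finrank K L E).symm

theorem fieldHomDegree_eq_one {f : K →+* L} (hf : Function.Bijective f) :
    fieldHomDegree f = 1 := by
  let _ := f.toAlgebra
  exact (LinearEquiv.ofBijective (Algebra.linearMap K L) hf).finrank_eq.symm.trans
    (Module.finrank_self K)

variable (p : ℕ) [ExpChar K p] [ExpChar L p]

theorem fieldHomDegree_frobenius_eq {g : K →+* L} (hg : fieldHomDegree g ≠ 0) :
    fieldHomDegree (frobenius K p) = fieldHomDegree (frobenius L p) := by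
  have hcomm : g.comp (frobenius K p) = (frobenius L p).comp g := g.frobenius_comm p
  have hdeg := congrArg fieldHomDegree hcomm
  rw [fieldHomDegree_comp, fieldHomDegree_comp, mul_comm] at hdeg
  exact mul_left_cancel₀ hg hdeg

theorem fieldHomDegree_iterateFrobenius (e : ℕ) :
    fieldHomDegree (iterateFrobenius K p e) = fieldHomDegree (frobenius K p) ^ e := by
  induction e with
  | zero => rw [pow_zero, iterateFrobenius_zero, fieldHomDegree_eq_one Function.bijective_id]
  | succ e ih => rw [add_comm, iterateFrobenius_add, iterateFrobenius_one, fieldHomDegree_comp, ih,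
      pow_add, pow_one, mul_comm]

end Degree

section ResidueDegree

variable {A B : Type*} [CommRing A] [IsLocalRing A] [CommRing B] [IsLocalRing B]

theorem length_eq_length_mul_fieldHomDegree [Algebra A B] [IsLocalHom (algebraMap A B)]
    (M : Type*) [AddCommGroup M] [Module A M] [Module B M] [IsScalarTower A B M]
    (hdeg : fieldHomDegree (ResidueField.map (algebraMap A B)) ≠ 0) :
    Module.length A M =
      Module.length B M * fieldHomDegree (ResidueField.map (algebraMap A B)) := by
  have hfinrank : fieldHomDegree (ResidueField.map (algebraMap A B)) =
      Module.finrank (ResidueField A) (ResidueField B) := fieldHomDegree_algebraMap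
  rw [hfinrank] at hdeg ⊢
  have := Module.finite_of_finrank_pos (Nat.pos_of_ne_zero hdeg)
  rw [length_restrictScalars A B, Module.length_eq_finrank]

theorem bijective_residueFieldMap {f : A →+* B} [IsLocalHom f] (hf : Function.Surjective f) :
    Function.Bijective (ResidueField.map f) := by
  refine ⟨RingHom.injective _, fun y => ?_⟩
  obtain ⟨b, rfl⟩ := residue_surjective y
  obtain ⟨a, rfl⟩ := hf b
  exact ⟨residue A a, ResidueField.map_residue f a⟩

end ResidueDegree

/-- The Frobenius pushforward `F^e_* A`: the ring `A`, regarded as an `A`-algebra through the `e`-th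
iterate of its Frobenius endomorphism. Cartier maps are `A`-linear maps `F^e_* A → A`. -/
def FrobeniusPushforward (_p _e : ℕ) (A : Type*) := A

namespace FrobeniusPushforward

variable {p e : ℕ} {A : Type*} [CommRing A]

instance : CommRing (FrobeniusPushforward p e A) := ‹CommRing A›

instance [IsLocalRing A] : IsLocalRing (FrobeniusPushforward p e A) := ‹IsLocalRing A›

variable (p e A) in
/-- The identity, as an isomorphism of rings from `F^e_* A` to `A`. -/
def equiv : FrobeniusPushforward p e A ≃+* A :=
  RingEquiv.refl A

variable [ExpChar A p]

noncomputable instance : Algebra A (FrobeniusPushforward p e A) :=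
  (iterateFrobenius A p e).toAlgebra

theorem equiv_smul (a : A) (x : FrobeniusPushforward p e A) :
    equiv p e A (a • x) = a ^ p ^ e * equiv p e A x :=
  rfl

instance : IsLocalHom (algebraMap A (FrobeniusPushforward p e A)) where
  map_nonunit a ha := (isUnit_pow_iff (pow_ne_zero e (expChar_pos A p).ne')).1
    (show IsUnit (a ^ p ^ e) from ha)

variable [IsLocalRing A] [ExpChar (ResidueField A) p]

theorem fieldHomDegree_residueFieldMap :
    fieldHomDegree (ResidueField.map (algebraMap A (FrobeniusPushforward p e A))) =
      fieldHomDegree (frobenius (ResidueField A) p) ^ e := by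
  rw [← fieldHomDegree_iterateFrobenius]
  refine congrArg (fieldHomDegree (K := ResidueField A) (L := ResidueField A))
    (Ideal.Quotient.ringHom_ext (RingHom.ext fun x => ?_))
  exact (iterateFrobenius_def p e (residue A x)).symm

theorem length_quotient (J : Ideal A)
    (hr : fieldHomDegree (frobenius (ResidueField A) p) ≠ 0) :
    Module.length A (FrobeniusPushforward p e A ⧸ J.comap (equiv p e A)) =
      Module.length A (A ⧸ J) * (fieldHomDegree (frobenius (ResidueField A) p) ^ e : ℕ) := by
  rw [← fieldHomDegree_residueFieldMap (e := e)]
  refine length_eq_length_mul_fieldHomDegree (B := FrobeniusPushforward p e A)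
    (FrobeniusPushforward p e A ⧸ J.comap (equiv p e A)) ?_
  rw [fieldHomDegree_residueFieldMap]
  exact pow_ne_zero e hr

end FrobeniusPushforward

section SplittingIdeal

theorem length_map_mkQ_eq_length_range {A X Z : Type*} [CommRing A] [AddCommGroup X]
    [Module A X] [AddCommGroup Z] [Module A Z] {P N : Submodule A X} {γ : P →ₗ[A] Z}
    (h : ∀ x : P, γ x = 0 ↔ (x : X) ∈ N) :
    Module.length A (P.map N.mkQ) = Module.length A (LinearMap.range γ) := by
  have hker : LinearMap.ker γ = LinearMap.ker (N.mkQ ∘ₗ P.subtype) := by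
    ext x
    simp [h]
  rw [← γ.quotKerEquivRange.length_eq, hker, (LinearMap.quotKerEquivRange _).length_eq,
    LinearMap.range_comp, Submodule.range_subtype]

/-- A family of `p^e`-semilinear endomorphisms of a ring closed under the operations imposed on the
degree `e` part of a Cartier algebra; it is the empty set or a right `F^e_* A`-module. -/
structure IsCartierFamily (p e : ℕ) {A : Type*} [CommRing A] (D : Set (A →+ A)) : Prop where
  isCartierMap : ∀ φ ∈ D, IsCartierMap p A e φ
  add_mem : ∀ φ ∈ D, ∀ ψ ∈ D, φ + ψ ∈ D
  smul_mem : ∀ a : A, ∀ φ ∈ D, a • φ ∈ D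
  comp_mulLeft_mem : ∀ a : A, ∀ φ ∈ D, φ.comp (AddMonoidHom.mulLeft a) ∈ D

variable {p e : ℕ} {A : Type*} [CommRing A]

variable (p e A) in
/-- The `A`-module `Hom_A(F^e_* A, A)` of all `p^e`-semilinear endomorphisms of `A`. -/
def cartierMaps : Submodule A (A →+ A) where
  carrier := {φ | IsCartierMap p A e φ}
  add_mem' hφ hψ a x := by
    rw [AddMonoidHom.add_apply, AddMonoidHom.add_apply, hφ a x, hψ a x, smul_add]
  zero_mem' a x := by simp
  smul_mem' b φ hφ a x := by
    rw [AddMonoidHom.smul_apply, AddMonoidHom.smul_apply, hφ a x, smul_comm]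

namespace IsCartierFamily

variable {D : Set (A →+ A)} (hD : IsCartierFamily p e D)
include hD

theorem mem_span_iff {φ : A →+ A} : φ ∈ Submodule.span A D ↔ φ = 0 ∨ φ ∈ D := by
  refine ⟨fun hφ => ?_, ?_⟩
  · induction hφ using Submodule.span_induction with
    | mem φ hφ => exact .inr hφ
    | zero => exact .inl rfl
    | add φ ψ _ _ hφ hψ =>
      rcases hφ with rfl | hφ
      · rwa [zero_add]
      · rcases hψ with rfl | hψ
        · rw [add_zero]
          exact .inr hφ
        · exact .inr (hD.add_mem φ hφ ψ hψ)
    | smul a φ _ hφ => exact hφ.imp (fun h => by rw [h, smul_zero]) (hD.smul_mem a φ)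
  · rintro (rfl | hφ)
    exacts [zero_mem _, Submodule.subset_span hφ]

theorem span_le_cartierMaps : Submodule.span A D ≤ cartierMaps p e A :=
  Submodule.span_le.2 hD.isCartierMap

end IsCartierFamily

variable [IsLocalRing A]

/-- The splitting ideal `I_e` of a family of additive maps: the largest ideal that every member maps
into the maximal ideal. The splitting number of a Cartier family is the length of `F^e_* (A / I_e)`
over `A`. -/
def splittingIdeal (D : Set (A →+ A)) : Ideal A where
  carrier := {x | ∀ φ ∈ D, ∀ a, φ (a * x) ∈ maximalIdeal A}
  add_mem' hx hy φ hφ a := by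
    rw [mul_add, map_add]
    exact Ideal.add_mem _ (hx φ hφ a) (hy φ hφ a)
  zero_mem' φ _ a := by simp
  smul_mem' b x hx φ hφ a := by
    rw [smul_eq_mul, ← mul_assoc]
    exact hx φ hφ (a * b)

namespace IsCartierFamily

variable {D : Set (A →+ A)} (hD : IsCartierFamily p e D)
include hD

theorem mem_splittingIdeal {x : A} :
    x ∈ splittingIdeal D ↔ ∀ φ ∈ D, φ x ∈ maximalIdeal A :=
  ⟨fun hx φ hφ => by simpa using hx φ hφ 1,
    fun hx φ hφ a => hx _ (hD.comp_mulLeft_mem a φ hφ)⟩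

theorem pow_mem_splittingIdeal {a : A} (ha : a ∈ maximalIdeal A) :
    a ^ p ^ e ∈ splittingIdeal D := by
  refine hD.mem_splittingIdeal.2 fun φ hφ => ?_
  rw [← mul_one (a ^ p ^ e), ← smul_eq_mul, hD.isCartierMap φ hφ]
  exact Ideal.mul_mem_right _ _ ha

theorem mem_span_nonsplit_iff {φ : A →+ A} (hφ : φ ∈ Submodule.span A D) :
    φ ∈ Submodule.span A {ϑ ∈ D | ∀ x, ϑ x ∈ maximalIdeal A} ↔ ∀ x, φ x ∈ maximalIdeal A := by
  refine ⟨fun h x => ?_, fun h => ?_⟩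
  · clear hφ
    induction h using Submodule.span_induction with
    | mem ϑ hϑ => exact hϑ.2 x
    | zero => exact Ideal.zero_mem _
    | add ϑ ϑ' _ _ hϑ hϑ' => exact Ideal.add_mem _ hϑ hϑ'
    | smul a ϑ _ hϑ => exact Ideal.mul_mem_left _ a hϑ
  · rcases hD.mem_span_iff.1 hφ with rfl | hφ
    exacts [zero_mem _, Submodule.subset_span ⟨hφ, h⟩]

end IsCartierFamily

variable [ExpChar A p]

/-- The pairing `F^e_* A × P → k` sending `(x, φ)` to the residue class of `φ x`, for a module `P`
of Cartier maps. Its two radicals are the splitting ideal and the nonsplit maps. -/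
noncomputable def residuePairing {P : Submodule A (A →+ A)} (hP : P ≤ cartierMaps p e A) :
    FrobeniusPushforward p e A →ₗ[A] P →ₗ[A] ResidueField A :=
  LinearMap.mk₂ A (fun x φ => residue A (φ.1 (FrobeniusPushforward.equiv p e A x)))
    (fun x y φ => by rw [map_add, map_add, map_add])
    (fun a x φ => by
      rw [FrobeniusPushforward.equiv_smul, ← smul_eq_mul, hP φ.2, smul_eq_mul, map_mul]
      rfl)
    (fun x φ ψ => map_add (residue A) _ _)
    (fun a x φ => map_mul (residue A) _ _)

theorem residuePairing_eq_zero_iff {P : Submodule A (A →+ A)} (hP : P ≤ cartierMaps p e A)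
    {x : FrobeniusPushforward p e A} {φ : P} :
    residuePairing hP x φ = 0 ↔ φ.1 (FrobeniusPushforward.equiv p e A x) ∈ maximalIdeal A :=
  residue_eq_zero_iff _

namespace IsCartierFamily

variable {D : Set (A →+ A)} (hD : IsCartierFamily p e D)
include hD

theorem ker_residuePairing :
    LinearMap.ker (residuePairing hD.span_le_cartierMaps) =
      ((splittingIdeal D).comap (FrobeniusPushforward.equiv p e A)).restrictScalars A := by
  ext x
  rw [LinearMap.mem_ker, Submodule.restrictScalars_mem, Ideal.mem_comap, hD.mem_splittingIdeal,
    LinearMap.ext_iff, Subtype.forall]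
  refine ⟨fun hx φ hφ => ?_, fun hx φ hφ => ?_⟩
  · exact (residuePairing_eq_zero_iff _).1 (hx φ (Submodule.subset_span hφ))
  · refine (residuePairing_eq_zero_iff _).2 ?_
    rcases hD.mem_span_iff.1 hφ with rfl | hφ
    exacts [Ideal.zero_mem _, hx φ hφ]

theorem splitNum_eq [IsNoetherianRing A] [ExpChar (ResidueField A) p]
    (hr : fieldHomDegree (frobenius (ResidueField A) p) ≠ 0) :
    splitNum A D = (Module.length A (A ⧸ splittingIdeal D) *
      (fieldHomDegree (frobenius (ResidueField A) p) ^ e : ℕ) : ℕ∞) := by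
  set β := residuePairing hD.span_le_cartierMaps
  have hlen : Module.length A (LinearMap.range β) = Module.length A (A ⧸ splittingIdeal D) *
      (fieldHomDegree (frobenius (ResidueField A) p) ^ e : ℕ) := by
    rw [← β.quotKerEquivRange.length_eq, hD.ker_residuePairing]
    exact FrobeniusPushforward.length_quotient _ hr
  have hfin : Module.length A (LinearMap.range β) ≠ ⊤ := by
    rw [hlen]
    exact WithTop.mul_ne_top (length_quotient_ne_top_of_pow_mem fun _ => hD.pow_mem_splittingIdeal)
      (ENat.natCast_ne_top _)
  have hker (φ : Submodule.span A D) : β.flip φ = 0 ↔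
      (φ : A →+ A) ∈ Submodule.span A {ϑ ∈ D | ∀ x, ϑ x ∈ maximalIdeal A} := by
    rw [hD.mem_span_nonsplit_iff φ.2, LinearMap.ext_iff]
    exact forall_congr' fun x => residuePairing_eq_zero_iff hD.span_le_cartierMaps
  rw [splitNum, moduleLength, ← Module.coe_length, length_map_mkQ_eq_length_range hker,
    length_range_flip_eq (M := Submodule.span A D) β hfin, hlen]

end IsCartierFamily

end SplittingIdeal

section CartierAlgebras

variable {p e : ℕ} {A : Type*} [CommRing A]

namespace CartierStructure

theorem isCartierFamily (C : CartierStructure p A A) (he : 1 ≤ e) :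
    IsCartierFamily p e (C.carrier e) where
  isCartierMap := C.cartier_mem e he
  add_mem := C.add_mem e he
  smul_mem := C.smul_mem e he
  comp_mulLeft_mem := C.mul_mem e he

theorem map_mem_spSet [IsLocalRing A] (C : CartierStructure p A A) (he : 1 ≤ e) {φ : A →+ A}
    (hφ : φ ∈ C.carrier e) {x : A} (hx : x ∈ spSet A C.carrier) : φ x ∈ spSet A C.carrier :=
  fun d hd ψ hψ => hx (d + e) (le_add_right hd) (ψ.comp φ) (C.comp_mem d e hd he ψ hψ φ hφ)

end CartierStructure

theorem mem_spSet_iff [IsLocalRing A] {D : ℕ → Set (A →+ A)}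
    (hD : ∀ e, 1 ≤ e → IsCartierFamily p e (D e)) {x : A} :
    x ∈ spSet A D ↔ ∀ e, 1 ≤ e → x ∈ splittingIdeal (D e) :=
  forall₂_congr fun e he => (hD e he).mem_splittingIdeal.symm

section Induced

variable {I : Ideal A} {D : ℕ → Set (A →+ A)}

theorem IsCartierFamily.inducedFam (hD : IsCartierFamily p e (D e)) :
    IsCartierFamily p e (inducedFam I D e) where
  isCartierMap := by
    rintro φb ⟨φ, hφ, h⟩ a x
    obtain ⟨a, rfl⟩ := Ideal.Quotient.mk_surjective a
    obtain ⟨x, rfl⟩ := Ideal.Quotient.mk_surjective x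
    rw [smul_eq_mul, smul_eq_mul, ← map_pow, ← map_mul, h, h, ← map_mul]
    exact congrArg _ (hD.isCartierMap φ hφ a x)
  add_mem := by
    rintro φb ⟨φ, hφ, h⟩ ψb ⟨ψ, hψ, h'⟩
    exact ⟨φ + ψ, hD.add_mem φ hφ ψ hψ, fun x => by simp [h, h']⟩
  smul_mem := by
    rintro a φb ⟨φ, hφ, h⟩
    obtain ⟨a, rfl⟩ := Ideal.Quotient.mk_surjective a
    exact ⟨a • φ, hD.smul_mem a φ hφ, fun x => by simp [h]⟩
  comp_mulLeft_mem := by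
    rintro a φb ⟨φ, hφ, h⟩
    obtain ⟨a, rfl⟩ := Ideal.Quotient.mk_surjective a
    exact ⟨_, hD.comp_mulLeft_mem a φ hφ, fun x => h (a * x)⟩

theorem comap_mk_splittingIdeal_inducedFam [IsLocalRing A] [IsLocalRing (A ⧸ I)]
    (hI : ∀ φ ∈ D e, ∀ x ∈ I, φ x ∈ I) :
    (splittingIdeal (inducedFam I D e)).comap (Ideal.Quotient.mk I) = splittingIdeal (D e) := by
  have hmk (x : A) : Ideal.Quotient.mk I x ∈ maximalIdeal (A ⧸ I) ↔ x ∈ maximalIdeal A := by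
    have := IsLocalHom.of_surjective (Ideal.Quotient.mk I) Ideal.Quotient.mk_surjective
    rw [← Ideal.mem_comap, maximalIdeal_comap]
  ext x
  refine ⟨fun hx φ hφ a => ?_, ?_⟩
  · rw [← hmk]
    exact hx (QuotientAddGroup.map I.toAddSubgroup I.toAddSubgroup φ (hI φ hφ))
      ⟨φ, hφ, fun _ => rfl⟩ (Ideal.Quotient.mk I a)
  · rintro hx φb ⟨φ, hφ, h⟩ a
    obtain ⟨a, rfl⟩ := Ideal.Quotient.mk_surjective a
    rw [← map_mul, h, hmk]
    exact hx φ hφ a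

end Induced

section Pushforward

variable {B : Type*} [CommRing B] {D : ℕ → Set (A →+ A)} {tr : ℕ → (A →+ A) → (B →+ B)}

theorem isCartierFamily_pushFam (htr : ∀ φ ∈ D e, IsCartierMap p B e (tr e φ)) :
    IsCartierFamily p e (pushFam D tr e) where
  isCartierMap := by
    rintro _ ⟨k, φ, s, hφ, rfl⟩
    refine (cartierMaps p e B).sum_mem fun i _ a x => ?_
    rw [AddMonoidHom.comp_apply, AddMonoidHom.coe_mulLeft, mul_smul_comm, htr _ (hφ i)]
    rfl
  add_mem := by
    rintro _ ⟨k, φ, s, hφ, rfl⟩ _ ⟨l, φ', s', hφ', rfl⟩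
    refine ⟨k + l, Fin.append φ φ', Fin.append s s', fun i => ?_, by simp [Fin.sum_univ_add]⟩
    refine Fin.addCases (fun i => ?_) (fun i => ?_) i
    · rw [Fin.append_left]
      exact hφ i
    · rw [Fin.append_right]
      exact hφ' i
  smul_mem := by
    rintro a _ ⟨k, φ, s, hφ, rfl⟩
    refine ⟨k, φ, fun i => a ^ p ^ e * s i, hφ, ?_⟩
    rw [Finset.smul_sum]
    refine Finset.sum_congr rfl fun i _ => AddMonoidHom.ext fun x => ?_
    simpa [mul_assoc] using (htr _ (hφ i) a (s i * x)).symm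
  comp_mulLeft_mem := by
    rintro a _ ⟨k, φ, s, hφ, rfl⟩
    refine ⟨k, φ, fun i => s i * a, hφ, AddMonoidHom.ext fun x => ?_⟩
    simp [mul_assoc]

variable [Algebra A B] {T : B →ₗ[A] A} (htr : ∀ φ ∈ D e, IsTranspose p T e φ (tr e φ))
include htr

theorem map_mem_pullbackIdeal {I J : Ideal A} (hIJ : ∀ φ ∈ D e, ∀ x ∈ I, φ x ∈ J) {ψ : B →+ B}
    (hψ : ψ ∈ pushFam D tr e) {b : B} (hb : b ∈ pullbackIdeal T I) : ψ b ∈ pullbackIdeal T J := by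
  obtain ⟨k, φ, s, hφ, rfl⟩ := hψ
  rw [AddMonoidHom.finsetSum_apply]
  refine Ideal.sum_mem _ fun i _ x => ?_
  rw [AddMonoidHom.comp_apply, AddMonoidHom.coe_mulLeft, htr _ (hφ i), mul_comm (s i), mul_assoc]
  exact hIJ _ (hφ i) _ (hb _)

variable [IsLocalRing A] [IsLocalRing B]

theorem splittingIdeal_pushFam (hT : Function.Surjective T)
    (hTm : ∀ b ∈ maximalIdeal B, T b ∈ maximalIdeal A) :
    splittingIdeal (pushFam D tr e) = pullbackIdeal T (splittingIdeal (D e)) := by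
  ext b
  refine ⟨fun hb x φ hφ a => ?_, fun hb ψ hψ a => ?_⟩
  · have hmem := hb ((tr e φ).comp (AddMonoidHom.mulLeft (a • x)))
      ⟨1, fun _ => φ, fun _ => a • x, fun _ => hφ, by simp⟩ 1
    have := hTm _ hmem
    rw [one_mul, AddMonoidHom.comp_apply, AddMonoidHom.coe_mulLeft, ← mul_one (tr e φ _),
      htr φ hφ, one_pow, mul_one, smul_mul_assoc, map_smul, mul_comm x] at this
    exact this
  · rw [← pullbackIdeal_maximalIdeal hT hTm]
    refine map_mem_pullbackIdeal htr (fun φ hφ x hx => ?_) hψ (Ideal.mul_mem_left _ a hb)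
    simpa using hx φ hφ 1

end Pushforward

theorem eq_pullbackIdeal_of_coe_eq_spSet {B : Type*} [CommRing B] [Algebra A B] [IsLocalRing A]
    [IsLocalRing B] {T : B →ₗ[A] A} (hT : Function.Surjective T)
    (hTm : ∀ b ∈ maximalIdeal B, T b ∈ maximalIdeal A) (C : CartierStructure p A A)
    {tr : ℕ → (A →+ A) → (B →+ B)}
    (htr : ∀ e, 1 ≤ e → ∀ φ ∈ C.carrier e,
      IsCartierMap p B e (tr e φ) ∧ IsTranspose p T e φ (tr e φ))
    {P : Ideal A} (hP : (P : Set A) = spSet A C.carrier)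
    {Q : Ideal B} (hQ : (Q : Set B) = spSet B (pushFam C.carrier tr)) : Q = pullbackIdeal T P := by
  ext b
  have hmemQ : b ∈ Q ↔ ∀ e, 1 ≤ e → ∀ x, T (b * x) ∈ splittingIdeal (C.carrier e) := by
    rw [← SetLike.mem_coe, hQ,
      mem_spSet_iff fun e he => isCartierFamily_pushFam fun φ hφ => (htr e he φ hφ).1]
    refine forall₂_congr fun e he => ?_
    rw [splittingIdeal_pushFam (fun φ hφ => (htr e he φ hφ).2) hT hTm, mem_pullbackIdeal]
  have hmemP (a : A) : a ∈ P ↔ ∀ e, 1 ≤ e → a ∈ splittingIdeal (C.carrier e) := by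
    rw [← SetLike.mem_coe, hP, mem_spSet_iff fun e he => C.isCartierFamily he]
  simp only [hmemQ, mem_pullbackIdeal, hmemP]
  exact ⟨fun h x e he => h e he x, fun h e he x => h x e he⟩

end CartierAlgebras

section DescendedTrace

variable {A B : Type*} [CommRing A] [CommRing B] [Algebra A B]

/-- The map `B / Q → A / P` induced by an `A`-linear map `T : B → A` with `T Q ⊆ P`. -/
noncomputable def quotientTrace (T : B →ₗ[A] A) {P : Ideal A} {Q : Ideal B} [Q.LiesOver P]
    (h : Q ≤ pullbackIdeal T P) : B ⧸ Q →ₗ[A ⧸ P] A ⧸ P where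
  __ := QuotientAddGroup.map Q.toAddSubgroup P.toAddSubgroup T.toAddMonoidHom fun b hb => by
    simpa using h hb 1
  map_smul' a b := by
    obtain ⟨a, rfl⟩ := Ideal.Quotient.mk_surjective a
    obtain ⟨b, rfl⟩ := Ideal.Quotient.mk_surjective b
    rw [Algebra.smul_def, Ideal.Quotient.algebraMap_mk_of_liesOver, ← map_mul, ← Algebra.smul_def]
    exact congrArg (Ideal.Quotient.mk P) (map_smul T a b)

theorem comap_mk_pullbackIdeal_quotientTrace {T : B →ₗ[A] A} {P : Ideal A} {Q : Ideal B}
    [Q.LiesOver P] (h : Q ≤ pullbackIdeal T P) (J : Ideal (A ⧸ P)) :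
    (pullbackIdeal (quotientTrace T h) J).comap (Ideal.Quotient.mk Q) =
      pullbackIdeal T (J.comap (Ideal.Quotient.mk P)) :=
  Ideal.ext fun b => (Ideal.Quotient.mk_surjective (I := Q)).forall
    (p := fun y => quotientTrace T h (Ideal.Quotient.mk Q b * y) ∈ J)

theorem pullbackIdeal_quotientTrace_bot {T : B →ₗ[A] A} {P : Ideal A} {Q : Ideal B}
    [Q.LiesOver P] (h : Q = pullbackIdeal T P) :
    pullbackIdeal (quotientTrace T h.le) ⊥ = ⊥ := by
  refine Ideal.comap_injective_of_surjective _ Ideal.Quotient.mk_surjective ?_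
  rw [comap_mk_pullbackIdeal_quotientTrace, ← RingHom.ker_eq_comap_bot, ← RingHom.ker_eq_comap_bot,
    Ideal.mk_ker, Ideal.mk_ker, h]

theorem splittingIdeal_inducedFam_pushFam [IsLocalRing A] [IsLocalRing B] {p e : ℕ}
    {D : ℕ → Set (A →+ A)} {tr : ℕ → (A →+ A) → (B →+ B)} {T : B →ₗ[A] A}
    (hT : Function.Surjective T) (hTm : ∀ b ∈ maximalIdeal B, T b ∈ maximalIdeal A)
    (htr : ∀ φ ∈ D e, IsTranspose p T e φ (tr e φ)) {P : Ideal A} {Q : Ideal B} [Q.LiesOver P]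
    [IsLocalRing (A ⧸ P)] [IsLocalRing (B ⧸ Q)] (hQ : Q = pullbackIdeal T P)
    (hP : ∀ φ ∈ D e, ∀ x ∈ P, φ x ∈ P) :
    splittingIdeal (inducedFam Q (pushFam D tr) e) =
      pullbackIdeal (quotientTrace T hQ.le) (splittingIdeal (inducedFam P D e)) := by
  have hQ' : ∀ ψ ∈ pushFam D tr e, ∀ b ∈ Q, ψ b ∈ Q := by
    rw [hQ]
    exact fun ψ hψ b hb => map_mem_pullbackIdeal htr hP hψ hb
  refine Ideal.comap_injective_of_surjective _ Ideal.Quotient.mk_surjective ?_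
  rw [comap_mk_splittingIdeal_inducedFam hQ', comap_mk_pullbackIdeal_quotientTrace,
    comap_mk_splittingIdeal_inducedFam hP, splittingIdeal_pushFam htr hT hTm]

end DescendedTrace

section FiniteLocalExtension

theorem ringKrullDim_eq_of_isIntegral {A B : Type*} [CommRing A] [CommRing B] [Algebra A B]
    [FaithfulSMul A B] [Algebra.IsIntegral A B] : ringKrullDim A = ringKrullDim B := by
  refine le_antisymm (iSup_le fun l => ?_)
    (Order.krullDim_le_of_strictMono (PrimeSpectrum.comap (algebraMap A B)) fun P Q h => ?_)
  · obtain ⟨Q, _, _⟩ := (inferInstance : Nonempty (l.head.asIdeal.primesOver B))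
    obtain ⟨L, hL, -, -⟩ := Ideal.exists_ltSeries_of_hasGoingUp l Q
    exact hL ▸ Order.LTSeries.length_le_krullDim L
  · exact Ideal.IsIntegral.comap_lt_comap (I := P.asIdeal) (J := Q.asIdeal) h

theorem fieldHomDegree_ne_zero_of_finite {K L : Type*} [Field K] [Field L] {f : K →+* L}
    (hf : f.Finite) : fieldHomDegree f ≠ 0 := by
  let _ := f.toAlgebra
  have : Module.Finite K L := hf
  exact Module.finrank_pos.ne'

variable {A B : Type*} [CommRing A] [IsLocalRing A] [CommRing B] [IsLocalRing B]

theorem fieldHomDegree_residueFieldMap_ne_zero [Algebra A B] [Module.Finite A B]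
    [IsLocalHom (algebraMap A B)] : fieldHomDegree (ResidueField.map (algebraMap A B)) ≠ 0 :=
  fieldHomDegree_ne_zero_of_finite
    (RingHom.finite_algebraMap.2 inferInstance :
      (algebraMap (ResidueField A) (ResidueField B)).Finite)

theorem fieldHomDegree_frobenius_residueField_of_surjective (p : ℕ) [ExpChar (ResidueField A) p]
    [ExpChar (ResidueField B) p] {f : A →+* B} (hf : Function.Surjective f) :
    fieldHomDegree (frobenius (ResidueField B) p) =
      fieldHomDegree (frobenius (ResidueField A) p) := by
  have : IsLocalHom f := .of_surjective f hf
  have hdeg := fieldHomDegree_eq_one (bijective_residueFieldMap hf)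
  exact (fieldHomDegree_frobenius_eq p (hdeg ▸ one_ne_zero)).symm

theorem fieldHomDegree_residueFieldMap_quotient [Algebra A B] [IsLocalHom (algebraMap A B)]
    {P : Ideal A} {Q : Ideal B} [Q.LiesOver P] [IsLocalRing (A ⧸ P)] [IsLocalRing (B ⧸ Q)]
    [IsLocalHom (algebraMap (A ⧸ P) (B ⧸ Q))] :
    fieldHomDegree (ResidueField.map (algebraMap (A ⧸ P) (B ⧸ Q))) =
      fieldHomDegree (ResidueField.map (algebraMap A B)) := by
  have hPmk : Function.Surjective (Ideal.Quotient.mk P) := Ideal.Quotient.mk_surjective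
  have hQmk : Function.Surjective (Ideal.Quotient.mk Q) := Ideal.Quotient.mk_surjective
  have : IsLocalHom (Ideal.Quotient.mk P) := .of_surjective _ hPmk
  have : IsLocalHom (Ideal.Quotient.mk Q) := .of_surjective _ hQmk
  have hcomm : (ResidueField.map (algebraMap (A ⧸ P) (B ⧸ Q))).comp
        (ResidueField.map (Ideal.Quotient.mk P)) =
      (ResidueField.map (Ideal.Quotient.mk Q)).comp (ResidueField.map (algebraMap A B)) :=
    Ideal.Quotient.ringHom_ext (RingHom.ext fun _ => rfl)
  have hdeg := congrArg fieldHomDegree hcomm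
  rwa [fieldHomDegree_comp, fieldHomDegree_comp,
    fieldHomDegree_eq_one (bijective_residueFieldMap hPmk),
    fieldHomDegree_eq_one (bijective_residueFieldMap hQmk), one_mul, mul_one] at hdeg

theorem fieldHomDegree_frobenius_residueField_ne_zero (p : ℕ) [ExpChar A p]
    [ExpChar (ResidueField A) p] (hF : (frobenius A p).Finite) :
    fieldHomDegree (frobenius (ResidueField A) p) ≠ 0 := by
  have hcomm : (frobenius (ResidueField A) p).comp (residue A) =
      (residue A).comp (frobenius A p) := ((residue A).frobenius_comm p).symm
  refine fieldHomDegree_ne_zero_of_finite (RingHom.Finite.of_comp_finite (f := residue A) ?_)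
  rw [hcomm]
  exact (RingHom.Finite.of_surjective _ residue_surjective).comp hF

end FiniteLocalExtension

section Asymptotics

open Asymptotics Filter

theorem isLittleO_of_pow_mul_norm_le {b C : ℝ} (hb : 1 < b) {u w : ℕ → ℝ}
    (h : ∀ᶠ e in atTop, b ^ e * ‖u e‖ ≤ C * ‖w e‖) : u =o[atTop] w := by
  have hb0 : 0 < b := one_pos.trans hb
  have hu : (fun e => b ^ e * u e) =O[atTop] w := by
    refine .of_bound C (h.mono fun e he => ?_)
    rwa [norm_mul, Real.norm_of_nonneg (pow_pos hb0 e).le]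
  have hinv : (fun e => b⁻¹ ^ e) =o[atTop] (fun _ => 1 : ℕ → ℝ) :=
    (isLittleO_one_iff ℝ).2
      (tendsto_pow_atTop_nhds_zero_of_lt_one (inv_pos.2 hb0).le (inv_lt_one_of_one_lt₀ hb))
  refine (hinv.mul_isBigO hu).congr (fun e => ?_) fun e => one_mul _
  rw [← mul_assoc, ← mul_pow, inv_mul_cancel₀ hb0.ne', one_pow, one_mul]

theorem natCast_mul_le_of_enat_mul_le {q c ρ x y : ℕ} {X Y : ℕ∞} (hx : (x : ℕ∞) = X * ρ)
    (hy : (y : ℕ∞) = Y * ρ) (h : q * X ≤ q * Y + c) : q * x ≤ q * y + c * ρ := by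
  have hρ := mul_le_mul_left h (ρ : ℕ∞)
  rw [add_mul, mul_assoc, mul_assoc, ← hx, ← hy] at hρ
  exact_mod_cast hρ

variable {p : ℕ} {A B : Type*} [CommRing A] [IsLocalRing A] [IsNoetherianRing A] [CommRing B]
  [IsLocalRing B] [ExpChar B p] [ExpChar (ResidueField A) p] [ExpChar (ResidueField B) p]
  [Algebra A B] [Module.Finite A B] [IsLocalHom (algebraMap A B)]

theorem fieldHomDegree_mul_splitNum_eq {e : ℕ} {D : Set (B →+ B)} (hD : IsCartierFamily p e D)
    (hr : fieldHomDegree (frobenius (ResidueField A) p) ≠ 0) {a : ℕ}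
    (ha : ((a : ℕ∞) : WithBot ℕ∞) = splitNum B D) :
    ((fieldHomDegree (ResidueField.map (algebraMap A B)) * a : ℕ) : ℕ∞) =
      Module.length A (B ⧸ splittingIdeal D) *
        (fieldHomDegree (frobenius (ResidueField A) p) ^ e : ℕ) := by
  have : IsNoetherianRing B := .of_finite A B
  have hl : fieldHomDegree (ResidueField.map (algebraMap A B)) ≠ 0 :=
    fieldHomDegree_residueFieldMap_ne_zero
  have hrB := fieldHomDegree_frobenius_eq p hl
  have haB := WithBot.coe_inj.1 (ha.trans (hD.splitNum_eq (hrB ▸ hr)))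
  rw [length_eq_length_mul_fieldHomDegree (A := A) (B ⧸ splittingIdeal D) hl, Nat.cast_mul, haB,
    hrB, mul_left_comm, mul_assoc]

variable [IsDomain A] [ExpChar A p] {d : ℕ} (hd : ringKrullDim A = d)
  (hr : fieldHomDegree (frobenius (ResidueField A) p) ≠ 0)
  {T : B →ₗ[A] A} (hT : pullbackIdeal T ⊥ = ⊥)
include hd hr hT

theorem exists_pow_mul_abs_splitNum_sub_le :
    ∃ C : ℕ, ∀ (e : ℕ) (D : Set (A →+ A)) (D' : Set (B →+ B)) (a a' : ℕ),
      IsCartierFamily p e D → IsCartierFamily p e D' →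
      splittingIdeal D' = pullbackIdeal T (splittingIdeal D) →
      ((a : ℕ∞) : WithBot ℕ∞) = splitNum A D → ((a' : ℕ∞) : WithBot ℕ∞) = splitNum B D' →
      (p : ℝ) ^ e * |(fieldHomDegree (ResidueField.map (algebraMap A B)) * a' -
          Module.finrank A B * a : ℝ)| ≤
        C * (p ^ (e * d) * fieldHomDegree (frobenius (ResidueField A) p) ^ e) := by
  obtain ⟨C₁, hC₁⟩ := exists_mul_length_quotient_pullbackIdeal_le hd T
  obtain ⟨C₂, hC₂⟩ := exists_mul_finrank_mul_length_quotient_le hd hT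
  refine ⟨C₁ + C₂, fun e D D' a a' hD hD' hDD' ha ha' => ?_⟩
  set r := fieldHomDegree (frobenius (ResidueField A) p)
  set l := fieldHomDegree (ResidueField.map (algebraMap A B))
  have hpow : ∀ x ∈ maximalIdeal A, x ^ p ^ e ∈ splittingIdeal D := fun _ =>
    hD.pow_mem_splittingIdeal
  have hlenA : ((Module.finrank A B * a : ℕ) : ℕ∞) =
      Module.finrank A B * Module.length A (A ⧸ splittingIdeal D) * (r ^ e : ℕ) := by
    rw [Nat.cast_mul, WithBot.coe_inj.1 (ha.trans (hD.splitNum_eq hr)), mul_assoc]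
  have hlenB : ((l * a' : ℕ) : ℕ∞) =
      Module.length A (B ⧸ pullbackIdeal T (splittingIdeal D)) * (r ^ e : ℕ) := by
    rw [← hDD']
    exact fieldHomDegree_mul_splitNum_eq hD' hr ha'
  have hBA : p ^ e * (l * a') ≤ p ^ e * (Module.finrank A B * a) + C₁ * (p ^ e) ^ d * r ^ e :=
    natCast_mul_le_of_enat_mul_le hlenB hlenA (hC₁ _ _ hpow)
  have hAB : p ^ e * (Module.finrank A B * a) ≤ p ^ e * (l * a') + C₂ * (p ^ e) ^ d * r ^ e :=
    natCast_mul_le_of_enat_mul_le hlenA hlenB (hC₂ _ _ hpow)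
  rify at hBA hAB
  have hbound (C : ℕ) : 0 ≤ (C : ℝ) * (p ^ e) ^ d * r ^ e := by positivity
  rw [← abs_of_nonneg (pow_nonneg p.cast_nonneg e : (0 : ℝ) ≤ p ^ e), ← abs_mul, abs_le, pow_mul,
    Nat.cast_add]
  constructor <;> linarith [hbound C₁, hbound C₂]

theorem isLittleO_sub_of_splittingIdeal_eq_pullbackIdeal [Fact p.Prime]
    {D : ℕ → Set (A →+ A)} (hD : ∀ e, 1 ≤ e → IsCartierFamily p e (D e))
    {D' : ℕ → Set (B →+ B)} (hD' : ∀ e, 1 ≤ e → IsCartierFamily p e (D' e))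
    (hDD' : ∀ e, 1 ≤ e → splittingIdeal (D' e) = pullbackIdeal T (splittingIdeal (D e)))
    {a a' : ℕ → ℕ} (ha : ∀ e, 1 ≤ e → ((a e : ℕ∞) : WithBot ℕ∞) = splitNum A (D e))
    (ha' : ∀ e, 1 ≤ e → ((a' e : ℕ∞) : WithBot ℕ∞) = splitNum B (D' e)) :
    (fun e => (fieldHomDegree (ResidueField.map (algebraMap A B)) * a' e -
        Module.finrank A B * a e : ℝ)) =o[atTop]
      fun e => (p : ℝ) ^ (e * d) * (fieldHomDegree (frobenius (ResidueField A) p) : ℝ) ^ e := by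
  obtain ⟨C, hC⟩ := exists_pow_mul_abs_splitNum_sub_le hd hr hT
  refine isLittleO_of_pow_mul_norm_le (b := p) (C := C)
    (Nat.one_lt_cast.2 (Fact.out : p.Prime).one_lt) ?_
  filter_upwards [eventually_ge_atTop 1] with e he
  rw [Real.norm_eq_abs, Real.norm_of_nonneg (by positivity)]
  exact hC e _ _ _ _ (hD e he) (hD' e he) (hDD' e he) (ha e he) (ha' e he)

end Asymptotics

section TransformationRule

open Asymptotics Filter

theorem charP_of_ringHom {p : ℕ} [Fact p.Prime] {A B : Type*} [NonAssocRing A] [Ring B]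
    [Nontrivial B] [CharP A p] (f : A →+* B) : CharP B p :=
  (CharP.charP_iff_prime_eq_zero Fact.out).2
    (by rw [← map_natCast f, CharP.cast_eq_zero, map_zero])

theorem finrank_eq_of_algebraMap_comm {A B F₁ F₂ : Type*} [CommRing A] [CommRing B] [Algebra A B]
    [Field F₁] [Field F₂] [Algebra A F₁] [IsFractionRing A F₁] [Algebra B F₂] [IsFractionRing B F₂]
    [Algebra F₁ F₂]
    (h : ∀ x : A, algebraMap F₁ F₂ (algebraMap A F₁ x) = algebraMap B F₂ (algebraMap A B x)) :
    Module.finrank F₁ F₂ = Module.finrank A B := by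
  let _ : Algebra A F₂ := ((algebraMap B F₂).comp (algebraMap A B)).toAlgebra
  have : IsScalarTower A B F₂ := .of_algebraMap_eq fun _ => rfl
  have : IsScalarTower A F₁ F₂ := .of_algebraMap_eq fun x => (h x).symm
  exact IsFractionRing.finrank_eq A F₁ B F₂

theorem mul_eq_mul_of_isLittleO_sub {ι : Type*} {ℓ : Filter ι} [ℓ.NeBot] {c c' x y : ℝ}
    {u v w : ι → ℝ} (h : (fun i => c * u i - c' * v i) =o[ℓ] w)
    (hu : Tendsto (fun i => u i / w i) ℓ (nhds x))
    (hv : Tendsto (fun i => v i / w i) ℓ (nhds y)) : c * x = c' * y := by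
  refine sub_eq_zero.1 (tendsto_nhds_unique ((hu.const_mul c).sub (hv.const_mul c')) ?_)
  refine h.tendsto_div_nhds_zero.congr fun i => ?_
  rw [sub_div, mul_div_assoc, mul_div_assoc]

variable {p : ℕ} [Fact p.Prime] {R S : Type*} [CommRing R] [CommRing S] [IsNoetherianRing R]
  [IsLocalRing R] [IsLocalRing S] [CharP R p] [Algebra R S] [Module.Finite R S]
  [IsLocalHom (algebraMap R S)] [CharP (ResidueField R) p]

theorem isLittleO_sub_of_inducedFam_pushFam {T : S →ₗ[R] R} (hT : Function.Surjective T)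
    (hTm : ∀ s ∈ maximalIdeal S, T s ∈ maximalIdeal R) (C : CartierStructure p R R)
    {tr : ℕ → (R →+ R) → (S →+ S)}
    (htr : ∀ e, 1 ≤ e → ∀ φ ∈ C.carrier e,
      IsCartierMap p S e (tr e φ) ∧ IsTranspose p T e φ (tr e φ))
    {P : Ideal R} (hP : (P : Set R) = spSet R C.carrier) {Q : Ideal S} [Q.IsPrime] [Q.LiesOver P]
    (hQ : Q = pullbackIdeal T P) [IsLocalRing (R ⧸ P)] [IsLocalRing (S ⧸ Q)]
    {d : ℕ} (hd : ringKrullDim (R ⧸ P) = d)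
    (hr : fieldHomDegree (frobenius (ResidueField R) p) ≠ 0) {a a' : ℕ → ℕ}
    (ha : ∀ e, 1 ≤ e → ((a e : ℕ∞) : WithBot ℕ∞) = splitNum (R ⧸ P) (inducedFam P C.carrier e))
    (ha' : ∀ e, 1 ≤ e → ((a' e : ℕ∞) : WithBot ℕ∞) =
      splitNum (S ⧸ Q) (inducedFam Q (pushFam C.carrier tr) e)) :
    (fun e => (fieldHomDegree (ResidueField.map (algebraMap R S)) * a' e -
        Module.finrank (R ⧸ P) (S ⧸ Q) * a e : ℝ)) =o[atTop]
      fun e => (p : ℝ) ^ (e * d) * (fieldHomDegree (frobenius (ResidueField R) p) : ℝ) ^ e := by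
  have : P.IsPrime := Ideal.isPrime_of_liesOver Q P
  have : Module.Finite (R ⧸ P) (S ⧸ Q) := .of_restrictScalars_finite R _ _
  have : CharP (R ⧸ P) p := charP_of_ringHom (Ideal.Quotient.mk P)
  have : CharP (S ⧸ Q) p := charP_of_ringHom (algebraMap (R ⧸ P) (S ⧸ Q))
  have : CharP (ResidueField (R ⧸ P)) p := charP_of_ringHom (residue (R ⧸ P))
  have : CharP (ResidueField (S ⧸ Q)) p := charP_of_ringHom (residue (S ⧸ Q))
  have hr' : fieldHomDegree (frobenius (ResidueField (R ⧸ P)) p) =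
      fieldHomDegree (frobenius (ResidueField R) p) :=
    fieldHomDegree_frobenius_residueField_of_surjective p Ideal.Quotient.mk_surjective
  rw [← hr'] at hr ⊢
  rw [← fieldHomDegree_residueFieldMap_quotient (P := P) (Q := Q)]
  refine isLittleO_sub_of_splittingIdeal_eq_pullbackIdeal hd hr (pullbackIdeal_quotientTrace_bot hQ)
    (fun e he => (C.isCartierFamily he).inducedFam)
    (fun e he => (isCartierFamily_pushFam fun φ hφ => (htr e he φ hφ).1).inducedFam)
    (fun e he => splittingIdeal_inducedFam_pushFam hT hTm (fun φ hφ => (htr e he φ hφ).2) hQ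
      fun φ hφ x hx => ?_) ha ha'
  rw [← SetLike.mem_coe, hP] at hx ⊢
  exact C.map_mem_spSet he hφ hx

theorem splittingRatio_transformation_rule_general [CharP (ResidueField S) p]
    (T : S →ₗ[R] R) (hT : Function.Surjective T)
    (hTm : ∀ s ∈ maximalIdeal S, T s ∈ maximalIdeal R)
    (C : CartierStructure p R R) (tr : ℕ → (R →+ R) → (S →+ S))
    (htr : ∀ e, 1 ≤ e → ∀ φ ∈ C.carrier e,
      IsCartierMap p S e (tr e φ) ∧ IsTranspose p T e φ (tr e φ))
    (P : Ideal R) (hP : (P : Set R) = spSet R C.carrier)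
    (Q : Ideal S) (hQ : (Q : Set S) = spSet S (pushFam C.carrier tr)) [Q.IsPrime]
    [IsLocalRing (R ⧸ P)] [IsLocalRing (S ⧸ Q)] (a a' : ℕ → ℕ)
    (ha : ∀ e, 1 ≤ e → ((a e : ℕ∞) : WithBot ℕ∞) = splitNum (R ⧸ P) (inducedFam P C.carrier e))
    (ha' : ∀ e, 1 ≤ e → ((a' e : ℕ∞) : WithBot ℕ∞) =
      splitNum (S ⧸ Q) (inducedFam Q (pushFam C.carrier tr) e))
    (d d' : ℕ) (hd : ringKrullDim (R ⧸ P) = d) (hd' : ringKrullDim (S ⧸ Q) = d')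
    (hr : fieldHomDegree (frobenius (ResidueField R) p) ≠ 0)
    (F₁ F₂ : Type*) [Field F₁] [Field F₂] [Algebra (R ⧸ P) F₁] [IsFractionRing (R ⧸ P) F₁]
    [Algebra (S ⧸ Q) F₂] [IsFractionRing (S ⧸ Q) F₂] [Algebra F₁ F₂]
    (hF : ∀ x : R, algebraMap F₁ F₂ (algebraMap (R ⧸ P) F₁ (Ideal.Quotient.mk P x)) =
      algebraMap (S ⧸ Q) F₂ (Ideal.Quotient.mk Q (algebraMap R S x)))
    {ι : Type*} {ℓ : Filter ι} [ℓ.NeBot] {ν : ι → ℕ} (hν : Tendsto ν ℓ atTop) {x y : ℝ}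
    (hx : Tendsto (fun i => (a (ν i) : ℝ) / ((p : ℝ) ^ (ν i * d) *
      (fieldHomDegree (frobenius (ResidueField R) p) : ℝ) ^ ν i)) ℓ (nhds x))
    (hy : Tendsto (fun i => (a' (ν i) : ℝ) / ((p : ℝ) ^ (ν i * d') *
      (fieldHomDegree (frobenius (ResidueField S) p) : ℝ) ^ ν i)) ℓ (nhds y)) :
    (fieldHomDegree (ResidueField.map (algebraMap R S)) : ℝ) * y = Module.finrank F₁ F₂ * x := by
  have hQP : Q = pullbackIdeal T P := eq_pullbackIdeal_of_coe_eq_spSet hT hTm C htr hP hQ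
  have : Q.LiesOver P := ⟨by rw [hQP, Ideal.under, comap_algebraMap_pullbackIdeal hT]⟩
  have : Module.Finite (R ⧸ P) (S ⧸ Q) := .of_restrictScalars_finite R _ _
  have hdim : ringKrullDim (R ⧸ P) = ringKrullDim (S ⧸ Q) := ringKrullDim_eq_of_isIntegral
  obtain rfl : d = d' := by exact_mod_cast hd.symm.trans (hdim.trans hd')
  rw [← fieldHomDegree_frobenius_eq p fieldHomDegree_residueFieldMap_ne_zero
    (g := ResidueField.map (algebraMap R S))] at hy
  rw [finrank_eq_of_algebraMap_comm (A := R ⧸ P) (B := S ⧸ Q)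
    (Ideal.Quotient.mk_surjective.forall.2 hF)]
  exact mul_eq_mul_of_isLittleO_sub
    ((isLittleO_sub_of_inducedFam_pushFam hT hTm C htr hP hQP hd hr ha ha').comp_tendsto hν) hy hx

end TransformationRule

/-- **Transformation rule for splitting ratios under finite covers:**
`[l : k] · r(S, f^*C) = [κ(sp(S,f^*C)) : κ(sp(R,C))] · r(R, C)`. -/
theorem splittingRatio_transformation_rule
    (p : ℕ) (hp : p.Prime) (R S : Type*) [CommRing R] [CommRing S]
    [IsDomain R] [IsDomain S] [IsNoetherianRing R] [IsNoetherianRing S]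
    [IsLocalRing R] [IsLocalRing S] [CharP R p] [CharP S p]
    [Algebra R S] [Module.Finite R S]
    (hinj : Function.Injective (algebraMap R S))
    (hloc : (IsLocalRing.maximalIdeal S).comap (algebraMap R S) = IsLocalRing.maximalIdeal R)
    [IsLocalHom (algebraMap R S)]
    (hFfR : letI := frobModule p hp R; Module.Finite R (FrobMod R))
    (hFfS : letI := frobModule p hp S; Module.Finite S (FrobMod S))
    (T : S →ₗ[R] R)
    (hσinj : Function.Injective ⇑(sigmaT R S T))
    (K : Type*) [Field K] [Algebra R K] [IsFractionRing R K]
    (hσgen : Function.Bijective ⇑(LinearMap.baseChange K (sigmaT R S T)))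
    (hTsurj : Function.Surjective ⇑T)
    (hTn : ∀ s ∈ IsLocalRing.maximalIdeal S, T s ∈ IsLocalRing.maximalIdeal R)
    (C : CartierStructure p R R) (tr : ℕ → (R →+ R) → (S →+ S))
    (htr : ∀ e, 1 ≤ e → ∀ φ ∈ C.carrier e,
      IsCartierMap p S e (tr e φ) ∧ IsTranspose p T e φ (tr e φ))
    (hFpure : (1 : R) ∉ spSet R C.carrier)
    (𝔭₀ : Ideal R) (h𝔭₀ : (𝔭₀ : Set R) = spSet R C.carrier) (h𝔭₀p : 𝔭₀.IsPrime)
    (𝔮₀ : Ideal S) (h𝔮₀ : (𝔮₀ : Set S) = spSet S (pushFam C.carrier tr)) (h𝔮₀p : 𝔮₀.IsPrime)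
    (hcomp : 𝔮₀.comap (algebraMap R S) = 𝔭₀)
    [IsLocalRing (R ⧸ 𝔭₀)] [IsLocalRing (S ⧸ 𝔮₀)]
    (aRb aSb : ℕ → ℕ)
    (haR : ∀ e, 1 ≤ e →
      ((aRb e : ℕ∞) : WithBot ℕ∞) = splitNum (R ⧸ 𝔭₀) (inducedFam 𝔭₀ C.carrier e))
    (haS : ∀ e, 1 ≤ e →
      ((aSb e : ℕ∞) : WithBot ℕ∞) =
        splitNum (S ⧸ 𝔮₀) (inducedFam 𝔮₀ (pushFam C.carrier tr) e))
    (hex : ∃ e, 1 ≤ e ∧ aRb e ≠ 0)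
    (n₀ : ℕ) (hn₀pos : 0 < n₀)
    (hn₀dvd : ∀ e, 1 ≤ e → aRb e ≠ 0 → n₀ ∣ e)
    (hn₀gcd : ∀ m : ℕ, (∀ e, 1 ≤ e → aRb e ≠ 0 → m ∣ e) → m ∣ n₀)
    (db db' : ℕ) (hdb : ringKrullDim (R ⧸ 𝔭₀) = db) (hdb' : ringKrullDim (S ⧸ 𝔮₀) = db')
    [CharP (IsLocalRing.ResidueField R) p] [CharP (IsLocalRing.ResidueField S) p]
    (rk : ℕ)
    (hrk : letI := frobModule p hp (IsLocalRing.ResidueField R)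
      rk = Module.finrank (IsLocalRing.ResidueField R) (FrobMod (IsLocalRing.ResidueField R)))
    (rl : ℕ)
    (hrl : letI := frobModule p hp (IsLocalRing.ResidueField S)
      rl = Module.finrank (IsLocalRing.ResidueField S) (FrobMod (IsLocalRing.ResidueField S)))
    (lk : ℕ)
    (hlk : letI : Algebra (IsLocalRing.ResidueField R) (IsLocalRing.ResidueField S) :=
        (IsLocalRing.ResidueField.map (algebraMap R S)).toAlgebra
      lk = Module.finrank (IsLocalRing.ResidueField R) (IsLocalRing.ResidueField S))
    (F₁ F₂ : Type*) [Field F₁] [Field F₂]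
    [Algebra (R ⧸ 𝔭₀) F₁] [IsFractionRing (R ⧸ 𝔭₀) F₁]
    [Algebra (S ⧸ 𝔮₀) F₂] [IsFractionRing (S ⧸ 𝔮₀) F₂] [Algebra F₁ F₂]
    (hcompat : ∀ x : R ⧸ 𝔭₀, algebraMap F₁ F₂ (algebraMap (R ⧸ 𝔭₀) F₁ x) =
      algebraMap (S ⧸ 𝔮₀) F₂ (Ideal.quotientMap 𝔮₀ (algebraMap R S) hcomp.ge x))
    (dLK : ℕ) (hdLK : dLK = Module.finrank F₁ F₂)
    (rR rS : ℝ)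
    (hrR : Filter.Tendsto
      (fun e : ℕ => (aRb (n₀ * e) : ℝ) / ((p : ℝ) ^ (n₀ * e * db) * (rk : ℝ) ^ (n₀ * e)))
      Filter.atTop (nhds rR))
    (hrS : Filter.Tendsto
      (fun e : ℕ => (aSb (n₀ * e) : ℝ) / ((p : ℝ) ^ (n₀ * e * db') * (rl : ℝ) ^ (n₀ * e)))
      Filter.atTop (nhds rS)) :
    (lk : ℝ) * rS = (dLK : ℝ) * rR := by
  have : Fact p.Prime := ⟨hp⟩
  obtain rfl : lk = fieldHomDegree (IsLocalRing.ResidueField.map (algebraMap R S)) :=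
    hlk.trans fieldHomDegree_algebraMap.symm
  subst hrk hrl hdLK
  exact splittingRatio_transformation_rule_general T hTsurj hTn C tr htr 𝔭₀ h𝔭₀ 𝔮₀ h𝔮₀ aRb aSb
    haR haS db db' hdb hdb' (fieldHomDegree_frobenius_residueField_ne_zero p hFfR) F₁ F₂
    (fun x => hcompat (Ideal.Quotient.mk 𝔭₀ x)) (Filter.tendsto_id.const_mul_atTop' hn₀pos) hrR hrS
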